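/- Let f : S → ℂ be a non-zero solution of the integral Van Vleck equation. Then for all x ∈ S, Σ_{i∈I} c_i f(τ(x) z_i) = Σ_{i∈I} c_i f(x z_i). -/

import Mathlib

/-!
Write `T f x = ∫ f (x t) dμ(t)` and `T' f x = ∫ f (x τ(t)) dμ(t)`. Every solution `f` is odd, so
`T' f (τ x) = -T f x` and the claim is that `D = T f + T' f` vanishes. Integrating the equation
with `T` and `T'` in either variable gives `f v * D u = D v * f u`. For `u = x τ(y)` the equation
turns `D u` into `T f (x y) - T f (y x)`; integrating once more, in `x` and then in `y`, shows that
`D v` annihilates `T f (x τ(y)) + T f (y τ(x))`, hence, again by the equation, all products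
`f x * f y`. Without nilpotents `D v` then annihilates `f`, and therefore `D`, so `D v ^ 2 = 0`.
-/

section Operators

variable {S ι R : Type*} [Semigroup S] [CommSemiring R] {I : Finset ι} {c : ι → R} {z : ι → S}

/-- The operator `f ↦ ∫ f (x t) dμ(t)` for the discrete measure `μ = ∑ i ∈ I, c i • δ_{z i}`. -/
def shiftIntegral (I : Finset ι) (c : ι → R) (z : ι → S) : (S → R) →ₗ[R] (S → R) where
  toFun f x := ∑ i ∈ I, c i * f (x * z i)
  map_add' f g := by ext x; simp only [Pi.add_apply, mul_add, Finset.sum_add_distrib]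
  map_smul' r f := by
    ext x
    simp only [Pi.smul_apply, smul_eq_mul, RingHom.id_apply, Finset.mul_sum, mul_left_comm]

theorem shiftIntegral_apply (f : S → R) (x : S) :
    shiftIntegral I c z f x = ∑ i ∈ I, c i * f (x * z i) := rfl

theorem shiftIntegral_comp_mul_left (f : S → R) (x y : S) :
    shiftIntegral I c z (fun t ↦ f (x * t)) y = shiftIntegral I c z f (x * y) := by
  simp only [shiftIntegral_apply, mul_assoc]

theorem shiftIntegral_comp_mul_right (hz : ∀ i ∈ I, z i ∈ Set.center S) (f : S → R) (x y : S) :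
    shiftIntegral I c z (fun t ↦ f (t * y)) x = shiftIntegral I c z f (x * y) := by
  refine Finset.sum_congr rfl fun i hi ↦ ?_
  beta_reduce
  rw [mul_assoc, mul_assoc, Semigroup.mem_center_iff.mp (hz i hi) y]

variable [StarMul S]

theorem shiftIntegral_comp_star (hz : ∀ i ∈ I, z i ∈ Set.center S) (f : S → R) (x : S) :
    shiftIntegral I c z (fun t ↦ f (star t)) x = shiftIntegral I c (star ∘ z) f (star x) := by
  refine Finset.sum_congr rfl fun i hi ↦ ?_
  beta_reduce
  rw [star_mul, Function.comp_apply,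
    Semigroup.mem_center_iff.mp (Set.star_mem_center (hz i hi)) (star x)]

theorem shiftIntegral_comp_mul_star (hz : ∀ i ∈ I, z i ∈ Set.center S) (f : S → R) (x y : S) :
    shiftIntegral I c z (fun t ↦ f (x * star t)) y =
      shiftIntegral I c (star ∘ z) f (x * star y) := by
  rw [shiftIntegral_comp_star hz fun t ↦ f (x * t), shiftIntegral_comp_mul_left]

/-- The operator `shiftIntegral` for the symmetrized measure `μ + star_* μ`. -/
def symmShiftIntegral (I : Finset ι) (c : ι → R) (z : ι → S) : (S → R) →ₗ[R] (S → R) :=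
  shiftIntegral I c z + shiftIntegral I c (star ∘ z)

theorem symmShiftIntegral_apply (f : S → R) (x : S) :
    symmShiftIntegral I c z f x = shiftIntegral I c z f x + shiftIntegral I c (star ∘ z) f x := rfl

end Operators

section VanVleck

variable {S ι κ R : Type*} [Semigroup S] [StarMul S] [CommRing R]
  {I : Finset ι} {c : ι → R} {z : ι → S} {J : Finset κ} {d : κ → R} {w : κ → S} {f : S → R}

/-- The integral Van Vleck equation for the measure `∑ i ∈ I, c i • δ_{z i}`, the involution of the
semigroup being written as `star`. -/
def IsVanVleck (I : Finset ι) (c : ι → R) (z : ι → S) (f : S → R) : Prop :=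
  ∀ x y, shiftIntegral I c z f (x * star y) - shiftIntegral I c z f (x * y) = 2 * f x * f y

namespace IsVanVleck

theorem shiftIntegral_left (hf : IsVanVleck I c z f) (hw : ∀ j ∈ J, w j ∈ Set.center S) (x y : S) :
    shiftIntegral J d w (shiftIntegral I c z f) (x * star y) -
        shiftIntegral J d w (shiftIntegral I c z f) (x * y) =
      2 * shiftIntegral J d w f x * f y := by
  have equation_in_x : (fun t ↦ shiftIntegral I c z f (t * star y)) -
      (fun t ↦ shiftIntegral I c z f (t * y)) = (2 * f y) • f :=
    funext fun t ↦ (hf t y).trans (mul_right_comm ..)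
  have integrated := congrFun (congrArg (shiftIntegral J d w) equation_in_x) x
  rw [map_sub, map_smul, Pi.sub_apply, shiftIntegral_comp_mul_right hw,
    shiftIntegral_comp_mul_right hw] at integrated
  exact integrated.trans (mul_right_comm ..)

theorem shiftIntegral_right (hf : IsVanVleck I c z f) (hw : ∀ j ∈ J, w j ∈ Set.center S)
    (x y : S) :
    shiftIntegral J d (star ∘ w) (shiftIntegral I c z f) (x * star y) -
        shiftIntegral J d w (shiftIntegral I c z f) (x * y) =
      2 * f x * shiftIntegral J d w f y := by
  have equation_in_y : (fun t ↦ shiftIntegral I c z f (x * star t)) -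
      (fun t ↦ shiftIntegral I c z f (x * t)) = (2 * f x) • f :=
    funext fun t ↦ hf x t
  have integrated := congrFun (congrArg (shiftIntegral J d w) equation_in_y) y
  rwa [map_sub, map_smul, Pi.sub_apply, shiftIntegral_comp_mul_star hw,
    shiftIntegral_comp_mul_left] at integrated

theorem mul_symmShiftIntegral_comm (hf : IsVanVleck I c z f) (h2 : IsLeftRegular (2 : R))
    (hw : ∀ j ∈ J, w j ∈ Set.center S) (x y : S) :
    f x * symmShiftIntegral J d w f y = symmShiftIntegral J d w f x * f y := by
  have hw' : ∀ j ∈ J, (star ∘ w) j ∈ Set.center S := fun j hj ↦ Set.star_mem_center (hw j hj)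
  have left := hf.shiftIntegral_left (d := d) hw x y
  have left' := hf.shiftIntegral_left (d := d) hw' x y
  have right := hf.shiftIntegral_right (d := d) hw x y
  have right' := hf.shiftIntegral_right (d := d) hw' x y
  rw [← Function.comp_assoc, star_involutive.comp_self, Function.id_comp] at right'
  apply h2
  simp only [symmShiftIntegral_apply]
  linear_combination left + left' - right - right'

variable [IsReduced R]

theorem map_star (hf : IsVanVleck I c z f) (h2 : IsLeftRegular (2 : R)) (x : S) :
    f (star x) = -f x := by
  have annihilates (y : S) : f y * (f (star x) + f x) = 0 := by
    have at_star := hf y (star x)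
    rw [star_star] at at_star
    apply h2
    linear_combination -(hf y x) - at_star
  have sq_zero : (f (star x) + f x) ^ 2 = 0 := by
    linear_combination annihilates (star x) + annihilates x
  exact eq_neg_of_add_eq_zero_left (eq_zero_of_pow_eq_zero sq_zero)

theorem shiftIntegral_star_comp (hf : IsVanVleck I c z f) (h2 : IsLeftRegular (2 : R))
    (hw : ∀ j ∈ J, w j ∈ Set.center S) (x : S) :
    shiftIntegral J d (star ∘ w) f x = -shiftIntegral J d w f (star x) := by
  have odd : (fun t ↦ f (star t)) = -f := funext (hf.map_star h2)
  rw [← Pi.neg_apply, ← map_neg, ← odd, shiftIntegral_comp_star hw, star_star]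

theorem symmShiftIntegral_eq_sub (hf : IsVanVleck I c z f) (h2 : IsLeftRegular (2 : R))
    (hw : ∀ j ∈ J, w j ∈ Set.center S) (x : S) :
    symmShiftIntegral J d w f x = shiftIntegral J d w f x - shiftIntegral J d w f (star x) := by
  rw [symmShiftIntegral_apply, hf.shiftIntegral_star_comp h2 hw, sub_eq_add_neg]

theorem symmShiftIntegral_mul_star (hf : IsVanVleck I c z f) (h2 : IsLeftRegular (2 : R))
    (hz : ∀ i ∈ I, z i ∈ Set.center S) (x y : S) :
    symmShiftIntegral I c z f (x * star y) =
      shiftIntegral I c z f (x * y) - shiftIntegral I c z f (y * x) := by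
  rw [hf.symmShiftIntegral_eq_sub h2 hz, star_mul, star_star]
  linear_combination hf x y - hf y x

theorem symmShiftIntegral_mul_add_eq_zero (hf : IsVanVleck I c z f) (h2 : IsLeftRegular (2 : R))
    (hz : ∀ i ∈ I, z i ∈ Set.center S) (v x y : S) :
    symmShiftIntegral I c z f v *
      (shiftIntegral I c z f (x * star y) + shiftIntegral I c z f (y * star x)) = 0 := by
  set T := shiftIntegral I c z
  set D := symmShiftIntegral I c z f
  have commutator (x y : S) : f v * (T f (x * y) - T f (y * x)) = D v * f (x * star y) := by
    rw [← hf.symmShiftIntegral_mul_star h2 hz, hf.mul_symmShiftIntegral_comm h2 hz]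
  have integrated_in_x : f v * (T (T f) (x * y) - T (T f) (y * x)) = D v * T f (x * star y) := by
    have commutator_in_x : f v • ((fun t ↦ T f (t * y)) - fun t ↦ T f (y * t)) =
        D v • fun t ↦ f (t * star y) := funext fun t ↦ commutator t y
    have integrated := congrFun (congrArg T commutator_in_x) x
    simpa only [T, map_smul, map_sub, Pi.smul_apply, Pi.sub_apply, smul_eq_mul,
      shiftIntegral_comp_mul_right hz, shiftIntegral_comp_mul_left] using integrated
  have integrated_in_y :
      f v * (T (T f) (x * y) - T (T f) (y * x)) = D v * -T f (y * star x) := by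
    have commutator_in_y : f v • ((fun t ↦ T f (x * t)) - fun t ↦ T f (t * x)) =
        D v • fun t ↦ f (x * star t) := funext fun t ↦ commutator x t
    have integrated := congrFun (congrArg T commutator_in_y) y
    simpa only [T, map_smul, map_sub, Pi.smul_apply, Pi.sub_apply, smul_eq_mul,
      shiftIntegral_comp_mul_right hz, shiftIntegral_comp_mul_left,
      shiftIntegral_comp_mul_star hz, hf.shiftIntegral_star_comp h2 hz, star_mul, star_star]
      using integrated
  linear_combination integrated_in_y - integrated_in_x

theorem symmShiftIntegral_mul_mul_eq_zero (hf : IsVanVleck I c z f) (h2 : IsLeftRegular (2 : R))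
    (hz : ∀ i ∈ I, z i ∈ Set.center S) (v x y : S) :
    symmShiftIntegral I c z f v * (f x * f y) = 0 := by
  set T := shiftIntegral I c z
  set D := symmShiftIntegral I c z f
  have annihilates (x y : S) : D v * (T f (x * star y) + T f (y * star x)) = 0 :=
    hf.symmShiftIntegral_mul_add_eq_zero h2 hz v x y
  have annihilates_star (x y : S) : D v * (T f (x * y) + T f (star y * star x)) = 0 := by
    simpa only [star_star] using annihilates x (star y)
  have eight_mul_mul : (T f (x * star y) + T f (y * star x)) +
        (T f (star x * y) + T f (star y * x)) -
        (T f (x * y) + T f (star y * star x)) - (T f (y * x) + T f (star x * star y)) =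
      2 ^ 3 * (f x * f y) := by
    have odd := hf.map_star h2
    linear_combination hf x y + hf y x - hf (star x) y - hf (star y) x -
      2 * f y * odd x - 2 * f x * odd y
  have annihilates_star_star : D v * (T f (star x * y) + T f (star y * x)) = 0 := by
    simpa only [star_star] using annihilates (star x) (star y)
  apply h2.pow 3
  linear_combination annihilates x y + annihilates_star_star - annihilates_star x y -
    annihilates_star y x - D v * eight_mul_mul

theorem symmShiftIntegral_eq_zero (hf : IsVanVleck I c z f) (h2 : IsLeftRegular (2 : R))
    (hz : ∀ i ∈ I, z i ∈ Set.center S) : symmShiftIntegral I c z f = 0 := by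
  funext v
  set D := symmShiftIntegral I c z f
  have annihilates_solution : D v • f = 0 := by
    funext x
    have sq_zero : (D v * f x) ^ 2 = 0 := by
      linear_combination D v * hf.symmShiftIntegral_mul_mul_eq_zero h2 hz v x x
    exact eq_zero_of_pow_eq_zero sq_zero
  have annihilates_self : D v • D = 0 := by
    rw [← map_smul, annihilates_solution, map_zero]
  have sq_zero : D v ^ 2 = 0 := (sq _).trans (congrFun annihilates_self v)
  exact eq_zero_of_pow_eq_zero sq_zero

end IsVanVleck

end VanVleck

theorem stmt_5_general {S ι R : Type*} [Semigroup S] [StarMul S] [CommRing R] [IsReduced R]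
    (h2 : IsLeftRegular (2 : R)) {I : Finset ι} {c : ι → R} {z : ι → S} {f : S → R}
    (hz : ∀ i ∈ I, z i ∈ Set.center S) (hf : IsVanVleck I c z f) (x : S) :
    shiftIntegral I c z f (star x) = shiftIntegral I c z f x := by
  have vanishes := congrFun (hf.symmShiftIntegral_eq_zero h2 hz) x
  rw [hf.symmShiftIntegral_eq_sub h2 hz] at vanishes
  exact (sub_eq_zero.mp vanishes).symm

theorem stmt_5 {S ι : Type*} [Semigroup S] (τ : S → S)
    (hτmul : ∀ x y : S, τ (x * y) = τ y * τ x)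
    (hτinv : ∀ x : S, τ (τ x) = x)
    (I : Finset ι) (c : ι → ℂ) (z : ι → S)
    (hz : ∀ i ∈ I, ∀ s : S, z i * s = s * z i)
    (f : S → ℂ) (hf : f ≠ 0)
(hVV : ∀ x y : S,
      (∑ i ∈ I, c i * f (x * τ y * z i)) - (∑ i ∈ I, c i * f (x * y * z i))
        = 2 * f x * f y) :
    ∀ x : S, (∑ i ∈ I, c i * f (τ x * z i)) = ∑ i ∈ I, c i * f (x * z i) := by
  let _ : StarMul S := { star := τ, star_involutive := hτinv, star_mul := hτmul }
  exact stmt_5_general (IsRegular.of_ne_zero two_ne_zero).left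
    (fun i hi ↦ Semigroup.mem_center_iff.mpr fun s ↦ (hz i hi s).symm) hVV
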